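/- If γ is non-oscillating at infinity, then with m and β as in the expansion of f at infinity along γ, the number m·β is an asymptotic critical value at infinity of the function g(x) = |x|^{m+1}·|∇f(x)|, witnessed along γ: g(x) → mβ and |x|·|∇g(x)| → 0 as |x| → ∞ along γ. -/

import Mathlib

open scoped RealInnerProductSpace Topology
open Filter

/-!
Differentiate along `γ` with respect to `log ‖x‖` and write `∂` for the resulting derivation.
Non-oscillation makes any two polynomial expressions along `γ` eventually comparable, as in a Hardy
field. In particular `∂ h` has a limit in `[-∞, ∞]`, which must be `0` if `h` is bounded.

For `h = log (-f * ‖x‖ ^ m)` this says `∂ f / f → -m`. Since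
`∂ f = ‖x‖ ^ 2 * ‖∇ f‖ ^ 2 / ⟪∇ f, x⟫`, it follows that `‖x‖ ^ (m + 1) * ‖∇ f‖ → m * β` and that
`∇ f` becomes radial. The same principle applied to `log (‖x‖ ^ (m + 1) * ‖∇ f‖)` and to the
coordinates of `∇ f / ‖∇ f‖` gives `∂ (∇ f) + (m + 1) • ∇ f = o(‖∇ f‖)`. By symmetry of the Hessian,
`∇ ‖∇ f‖` is the derivative of `∇ f` with respect to arc length, so in
`∇ (‖x‖ ^ (m + 1) * ‖∇ f‖)` the contributions of the two factors cancel to leading order.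
-/

open scoped Gradient

section EventualSign

/-- A function that is nonnegative near `+∞` or nonpositive near `+∞`. In a ring of functions all of
which have this property, any two elements are eventually comparable, as in a Hardy field. -/
def HasEventualSign (φ : ℝ → ℝ) : Prop :=
  (∀ᶠ s in atTop, 0 ≤ φ s) ∨ ∀ᶠ s in atTop, φ s ≤ 0

variable {φ ψ : ℝ → ℝ}

theorem hasEventualSign_const (c : ℝ) : HasEventualSign fun _ => c :=
  (le_total 0 c).imp (fun h => .of_forall fun _ => h) fun h => .of_forall fun _ => h

theorem HasEventualSign.congr (h : HasEventualSign φ) (hφψ : φ =ᶠ[atTop] ψ) : HasEventualSign ψ :=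
  h.imp (fun h => h.congr (hφψ.mono fun s hs => by rw [hs]))
    fun h => h.congr (hφψ.mono fun s hs => by rw [hs])

theorem hasEventualSign_of_continuousAt (hφ : ∀ᶠ s in atTop, ContinuousAt φ s)
    (h : ∃ s₀ : ℝ, (∀ s ≥ s₀, φ s = 0) ∨ ∀ s ≥ s₀, φ s ≠ 0) : HasEventualSign φ := by
  obtain ⟨s₀, hzero | hne⟩ := h
  · exact Or.inl (eventually_atTop.2 ⟨s₀, fun s hs => (hzero s hs).ge⟩)
  · obtain ⟨s₁, hcont⟩ := eventually_atTop.1 hφ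
    by_contra hsign
    simp only [HasEventualSign, not_or, not_eventually, not_le, frequently_atTop] at hsign
    obtain ⟨a, ha, hneg⟩ := hsign.1 (max s₀ s₁)
    obtain ⟨b, hb, hpos⟩ := hsign.2 (max s₀ s₁)
    obtain ⟨c, hc, hc0⟩ := isPreconnected_Ici.intermediate_value (Set.mem_Ici.2 ha)
      (Set.mem_Ici.2 hb)
      (fun s hs => (hcont s ((le_max_right _ _).trans hs)).continuousWithinAt) ⟨hneg.le, hpos.le⟩
    exact hne c ((le_max_left _ _).trans hc) hc0

theorem HasEventualSign.of_mul_pos (h : HasEventualSign fun s => φ s * ψ s)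
    (hψ : ∀ᶠ s in atTop, 0 < ψ s) : HasEventualSign φ := by
  refine h.imp (fun h => ?_) fun h => ?_
  · filter_upwards [h, hψ] with s h hψ using nonneg_of_mul_nonneg_left h hψ
  · filter_upwards [h, hψ] with s h hψ using nonpos_of_mul_nonpos_left h hψ

theorem HasEventualSign.sub_of_sq_sub_sq (hφ : HasEventualSign φ) (hψ : HasEventualSign ψ)
    (h : HasEventualSign fun s => φ s ^ 2 - ψ s ^ 2) : HasEventualSign fun s => φ s - ψ s := by
  rcases hφ with hφ | hφ <;> rcases hψ with hψ | hψ
  · refine h.imp (fun h => ?_) fun h => ?_ <;> filter_upwards [hφ, hψ, h] with s hφ hψ h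
    · exact sub_nonneg.2 ((sq_le_sq₀ hψ hφ).1 (sub_nonneg.1 h))
    · exact sub_nonpos.2 ((sq_le_sq₀ hφ hψ).1 (sub_nonpos.1 h))
  · left; filter_upwards [hφ, hψ] with s hφ hψ using by linarith
  · right; filter_upwards [hφ, hψ] with s hφ hψ using by linarith
  · refine h.symm.imp (fun h => ?_) fun h => ?_ <;> filter_upwards [hφ, hψ, h] with s hφ hψ h
    · nlinarith
    · nlinarith

end EventualSign

section BoundedPrimitive

variable {h w ρ ρ' : ℝ → ℝ} {C c : ℝ}

theorem not_eventually_const_le_of_bounded_of_hasDerivAt (hb : ∀ᶠ s in atTop, |h s| ≤ C)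
    (hh : ∀ᶠ s in atTop, HasDerivAt h (w s * ρ' s) s)
    (hρ : ∀ᶠ s in atTop, HasDerivAt ρ (ρ' s) s) (hρ' : ∀ᶠ s in atTop, 0 ≤ ρ' s)
    (hlim : Tendsto ρ atTop atTop) (hc : 0 < c) : ¬∀ᶠ s in atTop, c ≤ w s := by
  intro hw
  obtain ⟨a, ha⟩ := eventually_atTop.1 (hb.and (hh.and (hρ.and (hρ'.and hw))))
  have hderiv : ∀ s ≥ a, HasDerivAt (fun s => h s - c * ρ s) (w s * ρ' s - c * ρ' s) s := by
    intro s hs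
    obtain ⟨-, hh, hρ, -⟩ := ha s hs
    exact hh.sub (hρ.const_mul c)
  have hmono : MonotoneOn (fun s => h s - c * ρ s) (Set.Ici a) :=
    monotoneOn_of_hasDerivWithinAt_nonneg (convex_Ici a)
      (fun s hs => (hderiv s hs).continuousAt.continuousWithinAt)
      (fun s hs => (hderiv s (interior_subset hs)).hasDerivWithinAt) fun s hs => by
        obtain ⟨-, -, -, hρ', hw⟩ := ha s (interior_subset hs)
        exact sub_nonneg.2 (mul_le_mul_of_nonneg_right hw hρ')
  obtain ⟨s, hlarge, hs⟩ := (((hlim.const_mul_atTop hc).eventually_gt_atTop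
    (C + C + c * ρ a)).and (eventually_ge_atTop a)).exists
  have hle : h a - c * ρ a ≤ h s - c * ρ s := hmono Set.self_mem_Ici hs hs
  linarith [(abs_le.1 (ha s hs).1).2, (abs_le.1 (ha a le_rfl).1).1]

theorem tendsto_zero_of_bounded_of_hasDerivAt (hb : ∀ᶠ s in atTop, |h s| ≤ C)
    (hh : ∀ᶠ s in atTop, HasDerivAt h (w s * ρ' s) s)
    (hρ : ∀ᶠ s in atTop, HasDerivAt ρ (ρ' s) s) (hρ' : ∀ᶠ s in atTop, 0 ≤ ρ' s)
    (hlim : Tendsto ρ atTop atTop) (hw : ∀ c, HasEventualSign fun s => w s - c) :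
    Tendsto w atTop (𝓝 0) := by
  refine tendsto_order.2 ⟨fun c hc => ?_, fun c hc => ?_⟩
  · have hle := (hw (c / 2)).resolve_right fun hle =>
      not_eventually_const_le_of_bounded_of_hasDerivAt (h := fun s => -h s) (w := fun s => -w s)
        (c := -c / 2) (by simpa only [abs_neg] using hb)
        (hh.mono fun s hs => by simpa only [neg_mul, Pi.neg_def] using hs.neg) hρ hρ' hlim
        (by linarith) (hle.mono fun s hs => by linarith)
    filter_upwards [hle] with s hs using by linarith
  · have hle := (hw (c / 2)).resolve_left fun hle =>
      not_eventually_const_le_of_bounded_of_hasDerivAt hb hh hρ hρ' hlim (half_pos hc)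
        (hle.mono fun s hs => sub_nonneg.1 hs)
    filter_upwards [hle] with s hs using by linarith

theorem eventually_abs_le_of_tendsto {α : Type*} {l : Filter α} {u : α → ℝ} {L : ℝ}
    (hu : Tendsto u l (𝓝 L)) : ∀ᶠ s in l, |u s| ≤ |L| + 1 :=
  (hu.abs.eventually_lt_const (lt_add_one |L|)).mono fun _ => le_of_lt

theorem tendsto_neg_of_hasDerivAt_of_tendsto_mul_exp {φ u : ℝ → ℝ} {p L : ℝ} (hL : 0 < L)
    (hφ : Tendsto (fun s => φ s * Real.exp (ρ s * p)) atTop (𝓝 L))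
    (hd : ∀ᶠ s in atTop, HasDerivAt φ (u s * φ s * ρ' s) s)
    (hρ : ∀ᶠ s in atTop, HasDerivAt ρ (ρ' s) s) (hρ' : ∀ᶠ s in atTop, 0 ≤ ρ' s)
    (hlim : Tendsto ρ atTop atTop) (hu : ∀ c, HasEventualSign fun s => u s - c) :
    Tendsto u atTop (𝓝 (-p)) := by
  have hpos : ∀ᶠ s in atTop, 0 < φ s := by
    filter_upwards [hφ.eventually_const_lt hL] with s hs
      using pos_of_mul_pos_left hs (Real.exp_pos _).le
  have hlog : Tendsto (fun s => Real.log (φ s) + ρ s * p) atTop (𝓝 (Real.log L)) := by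
    refine (hφ.log hL.ne').congr' ?_
    filter_upwards [hpos] with s hs
    rw [Real.log_mul hs.ne' (Real.exp_ne_zero _), Real.log_exp]
  have hzero : Tendsto (fun s => u s + p) atTop (𝓝 0) := by
    refine tendsto_zero_of_bounded_of_hasDerivAt (eventually_abs_le_of_tendsto hlog) ?_ hρ hρ'
      hlim fun c => ?_
    · filter_upwards [hd, hρ, hpos] with s hd hρ hs
      refine ((hd.log hs.ne').add (hρ.mul_const p)).congr_deriv ?_
      field_simp
    · convert hu (c - p) using 2
      ring
  simpa using hzero.sub_const p

end BoundedPrimitive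

theorem tendsto_mul_rpow_of_isLittleO {α : Type*} {l : Filter α} {u r : α → ℝ} {L p : ℝ}
    (hr : ∀ᶠ s in l, 0 < r s)
    (h : (fun s => u s - L * r s ^ (-p)) =o[l] fun s => r s ^ (-p)) :
    Tendsto (fun s => u s * r s ^ p) l (𝓝 L) := by
  have hlim := h.tendsto_div_nhds_zero.add_const L
  rw [zero_add] at hlim
  refine hlim.congr' ?_
  filter_upwards [hr] with s hr
  rw [Real.rpow_neg hr.le]
  field_simp
  ring

section InnerProductSpace

variable {E : Type*} [NormedAddCommGroup E] [InnerProductSpace ℝ E]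
  {α : Type*} {l : Filter α}

theorem tendsto_zero_of_forall_inner_tendsto_zero [FiniteDimensional ℝ E] {u : α → E}
    (hu : ∀ v, Tendsto (fun s => ⟪v, u s⟫) l (𝓝 0)) : Tendsto u l (𝓝 0) := by
  let b := stdOrthonormalBasis ℝ E
  have hsum : Tendsto (fun s => ∑ i, ⟪b i, u s⟫ • b i) l (𝓝 (∑ i, (0 : ℝ) • b i)) :=
    tendsto_finsetSum _ fun i _ => (hu (b i)).smul_const (b i)
  simpa only [b.sum_repr', zero_smul, Finset.sum_const_zero] using hsum

theorem tendsto_sub_inner_smul_zero {a b : α → E} (ha : ∀ᶠ s in l, ‖a s‖ = 1)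
    (hb : ∀ᶠ s in l, ‖b s‖ = 1) (hab : Tendsto (fun s => ⟪a s, b s⟫) l (𝓝 1)) :
    Tendsto (fun s => a s - ⟪a s, b s⟫ • b s) l (𝓝 0) := by
  have hsq : Tendsto (fun s => √(1 - ⟪a s, b s⟫ ^ 2)) l (𝓝 0) := by
    simpa using ((hab.pow 2).const_sub 1).sqrt
  refine tendsto_zero_iff_norm_tendsto_zero.2 (hsq.congr' ?_)
  filter_upwards [ha, hb] with s ha hb
  rw [Real.sqrt_eq_iff_eq_sq ?_ (norm_nonneg _)]
  · rw [norm_sub_sq_real, norm_smul, inner_smul_right, ha, hb, mul_one, Real.norm_eq_abs, sq_abs]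
    ring
  · have := real_inner_mul_inner_self_le (a s) (b s)
    simp only [real_inner_self_eq_norm_sq, ha, hb] at this
    nlinarith

theorem tendsto_inner_unit_vectors_one {a b : α → E} {m c : ℝ} (hc : 0 < c)
    (ha : ∀ᶠ s in l, 0 < ‖a s‖)
    (hinner : Tendsto (fun s => ⟪b s, a s⟫ * ‖a s‖ ^ m) l (𝓝 c))
    (hnorm : Tendsto (fun s => ‖a s‖ ^ (m + 1) * ‖b s‖) l (𝓝 c)) :
    Tendsto (fun s => ⟪‖a s‖⁻¹ • a s, ‖b s‖⁻¹ • b s⟫) l (𝓝 1) := by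
  have h := hinner.div hnorm hc.ne'
  rw [div_self hc.ne'] at h
  refine h.congr' ?_
  filter_upwards [ha] with s ha
  rw [Pi.div_apply, Real.rpow_add_one ha.ne', real_inner_smul_left, real_inner_smul_right,
    real_inner_comm (b s)]
  field_simp

variable [CompleteSpace E] {f : E → ℝ} {x : E}

theorem inner_fderiv_gradient (f : E → ℝ) (x v w : E) :
    ⟪fderiv ℝ (∇ f) x v, w⟫ = fderiv ℝ (fderiv ℝ f) x v w := by
  have h := (InnerProductSpace.toDual ℝ E).symm.toContinuousLinearEquiv.comp_fderiv
    (f := fderiv ℝ f) (x := x)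
  have hfun : ⇑(InnerProductSpace.toDual ℝ E).symm.toContinuousLinearEquiv ∘ fderiv ℝ f = ∇ f := rfl
  rw [hfun] at h
  rw [h]
  exact InnerProductSpace.toDual_symm_apply

theorem differentiableAt_gradient (hf : ContDiffAt ℝ 2 f x) : DifferentiableAt ℝ (∇ f) x :=
  (InnerProductSpace.toDual ℝ E).symm.toContinuousLinearEquiv.differentiableAt.comp x
    ((hf.fderiv_right (m := 1) le_rfl).differentiableAt one_ne_zero)

theorem inner_fderiv_gradient_comm (hf : ContDiffAt ℝ 2 f x) (v w : E) :
    ⟪fderiv ℝ (∇ f) x v, w⟫ = ⟪fderiv ℝ (∇ f) x w, v⟫ := by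
  simpa only [inner_fderiv_gradient] using hf.isSymmSndFDerivAt (by simp) v w

theorem hasGradientAt_norm_gradient (hf : ContDiffAt ℝ 2 f x) (hx : ∇ f x ≠ 0) :
    HasGradientAt (fun y => ‖∇ f y‖) (‖∇ f x‖⁻¹ • fderiv ℝ (∇ f) x (∇ f x)) x := by
  have hsq := ((differentiableAt_gradient hf).hasFDerivAt.norm_sq).sqrt
    (pow_ne_zero 2 (norm_ne_zero_iff.2 hx))
  simp only [Real.sqrt_sq (norm_nonneg _)] at hsq
  refine hasGradientAt_iff_hasFDerivAt.2 (hsq.congr_fderiv ?_)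
  ext v
  simp only [one_div, mul_inv_rev, smul_apply, ContinuousLinearMap.comp_apply, coe_innerSL_apply,
    inner_gradient_left, nsmul_eq_mul, Nat.cast_ofNat, smul_eq_mul, map_smul,
    InnerProductSpace.toDual_apply_apply, inner_fderiv_gradient_comm hf _ v,
    real_inner_comm (∇ f x)]
  field_simp

theorem norm_smul_gradient_rpow_norm_mul_norm_gradient {p : ℝ} (hp : 1 < p)
    (hf : ContDiffAt ℝ 2 f x) (hx : x ≠ 0) (hgrad : ∇ f x ≠ 0) :
    ‖x‖ • ∇ (fun y => ‖y‖ ^ p * ‖∇ f y‖) x =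
      (‖x‖ ^ p * ‖∇ f x‖) • (p • ‖x‖⁻¹ • x +
        (‖x‖ / ‖∇ f x‖ ^ 2) • fderiv ℝ (∇ f) x (∇ f x)) := by
  have hx' : 0 < ‖x‖ := norm_pos_iff.2 hx
  have hgrad' : ‖∇ f x‖ ≠ 0 := norm_ne_zero_iff.2 hgrad
  have hg : HasGradientAt (fun y => ‖y‖ ^ p * ‖∇ f y‖)
      (‖x‖ ^ p • ‖∇ f x‖⁻¹ • fderiv ℝ (∇ f) x (∇ f x) +
        (‖∇ f x‖ * (p * ‖x‖ ^ (p - 2))) • x) x := by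
    refine hasGradientAt_iff_hasFDerivAt.2 (((hasFDerivAt_norm_rpow x hp).mul
      (hasGradientAt_norm_gradient hf hgrad).hasFDerivAt).congr_fderiv ?_)
    ext v
    simp [mul_assoc]
  rw [hg.gradient, Real.rpow_sub hx', Real.rpow_two]
  match_scalars <;> field_simp

end InnerProductSpace

section DifferentialAlgebra

variable {E : Type*} [NormedAddCommGroup E] [InnerProductSpace ℝ E] {𝒜 : Subalgebra ℝ (E → ℝ)}
  {F G : E → ℝ}

/-- A ring of functions on a Euclidean space that contains the linear forms and is stable under
directional derivatives, such as the polynomial functions. -/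
structure IsDifferentialAlgebra (𝒜 : Subalgebra ℝ (E → ℝ)) : Prop where
  differentiable : ∀ F ∈ 𝒜, Differentiable ℝ F
  fderiv_apply_mem : ∀ F ∈ 𝒜, ∀ v, (fun x => fderiv ℝ F x v) ∈ 𝒜
  inner_left_mem : ∀ v, (fun x => ⟪v, x⟫) ∈ 𝒜

theorem isDifferentialAlgebra_adjoin {S : Set (E → ℝ)} (hS : ∀ F ∈ S, Differentiable ℝ F)
    (hfderiv : ∀ F ∈ S, ∀ v, (fun x => fderiv ℝ F x v) ∈ Algebra.adjoin ℝ S)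
    (hinner : ∀ v, (fun x => ⟪v, x⟫) ∈ Algebra.adjoin ℝ S) :
    IsDifferentialAlgebra (Algebra.adjoin ℝ S) := by
  have hdiff : ∀ F ∈ Algebra.adjoin ℝ S, Differentiable ℝ F := fun F hF => by
    induction hF using Algebra.adjoin_induction with
    | mem F hF => exact hS F hF
    | algebraMap c => exact differentiable_const c
    | add F G _ _ hF hG => exact hF.add hG
    | mul F G _ _ hF hG => exact hF.mul hG
  refine ⟨hdiff, fun F hF v => ?_, hinner⟩
  induction hF using Algebra.adjoin_induction with
  | mem F hF => exact hfderiv F hF v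
  | algebraMap c =>
    convert zero_mem (Algebra.adjoin ℝ S) using 2 with x
    exact DFunLike.congr_fun (fderiv_const_apply (𝕜 := ℝ) (x := x) c) v
  | add F G hFS hGS hF hG =>
    convert add_mem hF hG using 2 with x
    rw [fderiv_add (hdiff F hFS x) (hdiff G hGS x)]
    rfl
  | mul F G hFS hGS hF hG =>
    convert add_mem (mul_mem hFS hG) (mul_mem hGS hF) using 2 with x
    rw [fderiv_mul (hdiff F hFS x) (hdiff G hGS x)]
    rfl

namespace IsDifferentialAlgebra

theorem contDiff [FiniteDimensional ℝ E] (h𝒜 : IsDifferentialAlgebra 𝒜) (hF : F ∈ 𝒜) (k : ℕ) :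
    ContDiff ℝ k F := by
  induction k generalizing F with
  | zero => exact contDiff_zero.2 (h𝒜.differentiable F hF).continuous
  | succ k ih =>
    exact contDiff_succ_iff_fderiv_apply.2
      ⟨h𝒜.differentiable F hF, by simp, fun v => ih (h𝒜.fderiv_apply_mem F hF v)⟩

theorem inner_gradient_mem [CompleteSpace E] (h𝒜 : IsDifferentialAlgebra 𝒜) (hF : F ∈ 𝒜) (v : E) :
    (fun x => ⟪v, ∇ F x⟫) ∈ 𝒜 := by
  simpa only [inner_gradient_right, conj_trivial] using h𝒜.fderiv_apply_mem F hF v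

end IsDifferentialAlgebra

theorem inner_mem_of_forall_inner_left_mem [FiniteDimensional ℝ E] {Y Z : E → E}
    (hY : ∀ v, (fun x => ⟪v, Y x⟫) ∈ 𝒜) (hZ : ∀ v, (fun x => ⟪v, Z x⟫) ∈ 𝒜) :
    (fun x => ⟪Y x, Z x⟫) ∈ 𝒜 := by
  let b := stdOrthonormalBasis ℝ E
  convert sum_mem fun i (_ : i ∈ Finset.univ) => mul_mem (hY (b i)) (hZ (b i)) using 1
  ext x
  rw [Finset.sum_apply, ← b.sum_inner_mul_inner]
  simp only [Pi.mul_apply, real_inner_comm (b _) (Y x)]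

namespace IsDifferentialAlgebra

variable [FiniteDimensional ℝ E]

theorem norm_sq_mem (h𝒜 : IsDifferentialAlgebra 𝒜) : (fun x => ‖x‖ ^ 2) ∈ 𝒜 := by
  simpa only [real_inner_self_eq_norm_sq, id] using
    inner_mem_of_forall_inner_left_mem (Y := id) (Z := id) h𝒜.inner_left_mem h𝒜.inner_left_mem

variable [CompleteSpace E]

theorem norm_gradient_sq_mem (h𝒜 : IsDifferentialAlgebra 𝒜) (hF : F ∈ 𝒜) :
    (fun x => ‖∇ F x‖ ^ 2) ∈ 𝒜 := by
  simpa only [real_inner_self_eq_norm_sq] using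
    inner_mem_of_forall_inner_left_mem (h𝒜.inner_gradient_mem hF) (h𝒜.inner_gradient_mem hF)

theorem inner_gradient_self_mem (h𝒜 : IsDifferentialAlgebra 𝒜) (hF : F ∈ 𝒜) :
    (fun x => ⟪∇ F x, x⟫) ∈ 𝒜 :=
  inner_mem_of_forall_inner_left_mem (Z := id) (h𝒜.inner_gradient_mem hF) h𝒜.inner_left_mem

theorem fderiv_apply_gradient_mem (h𝒜 : IsDifferentialAlgebra 𝒜) (hF : F ∈ 𝒜) (hG : G ∈ 𝒜) :
    (fun x => fderiv ℝ F x (∇ G x)) ∈ 𝒜 := by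
  simpa only [inner_gradient_left] using
    inner_mem_of_forall_inner_left_mem (h𝒜.inner_gradient_mem hF) (h𝒜.inner_gradient_mem hG)

end IsDifferentialAlgebra

/-- The algebra of polynomial functions on `ℝ^ι`, generated by the coordinates. -/
def euclideanPolynomialFunctions (ι : Type*) : Subalgebra ℝ (EuclideanSpace ℝ ι → ℝ) :=
  Algebra.adjoin ℝ (Set.range fun i x => x i)

theorem mem_euclideanPolynomialFunctions_iff {ι : Type*} {F : EuclideanSpace ℝ ι → ℝ} :
    F ∈ euclideanPolynomialFunctions ι ↔
      ∃ P : MvPolynomial ι ℝ, ∀ x, F x = MvPolynomial.eval (fun i => x i) P := by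
  rw [euclideanPolynomialFunctions, Algebra.adjoin_range_eq_range_aeval, AlgHom.mem_range]
  refine exists_congr fun P => ?_
  rw [eq_comm, funext_iff]
  refine forall_congr' fun x => ?_
  have heval : MvPolynomial.aeval (fun i (x : EuclideanSpace ℝ ι) => x i) P x =
      MvPolynomial.eval (fun i => x i) P := by
    induction P using MvPolynomial.induction_on with
    | C c => simp
    | add P Q hP hQ => simp [hP, hQ]
    | mul_X P i hP => simp [hP]
  rw [heval]

theorem isDifferentialAlgebra_euclideanPolynomialFunctions (ι : Type*) [Fintype ι] :
    IsDifferentialAlgebra (euclideanPolynomialFunctions ι) := by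
  refine isDifferentialAlgebra_adjoin ?_ ?_ fun v => ?_
  · rintro _ ⟨i, rfl⟩
    exact (EuclideanSpace.proj i : EuclideanSpace ℝ ι →L[ℝ] ℝ).differentiable
  · rintro _ ⟨i, rfl⟩ v
    convert Subalgebra.algebraMap_mem _ (v i) using 2 with x
    exact DFunLike.congr_fun (EuclideanSpace.proj i : EuclideanSpace ℝ ι →L[ℝ] ℝ).fderiv v
  · convert sum_mem fun i (_ : i ∈ Finset.univ) =>
      Subalgebra.smul_mem _ (Algebra.subset_adjoin (Set.mem_range_self i)) (v i) using 1
    ext x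
    simp [PiLp.inner_apply, mul_comm]

end DifferentialAlgebra

section GradientTrajectory

variable {E V : Type*} [NormedAddCommGroup E] [InnerProductSpace ℝ E] [CompleteSpace E]
  [NormedAddCommGroup V] [NormedSpace ℝ V] {f F G : E → ℝ} {γ : ℝ → E} {x : E}
  {𝒜 : Subalgebra ℝ (E → ℝ)}

/-- The derivative of `F` along the trajectories of `∇ f` with respect to `log ‖x‖`. It is only
meaningful where `⟪∇ f x, x⟫ ≠ 0`, so that `log ‖x‖` is a local parameter of the trajectory. -/
noncomputable def logRadialDeriv (f : E → ℝ) (F : E → V) (x : E) : V :=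
  (‖x‖ ^ 2 / ⟪∇ f x, x⟫) • fderiv ℝ F x (∇ f x)

/-- The derivative of `log ‖x‖` with respect to arc length along the trajectories of `∇ f`. -/
noncomputable def logRadialSpeed (f : E → ℝ) (x : E) : ℝ :=
  ⟪∇ f x, x⟫ / (‖∇ f x‖ * ‖x‖ ^ 2)

theorem logRadialDeriv_log_norm (hx : ⟪∇ f x, x⟫ ≠ 0) :
    logRadialDeriv f (fun y => Real.log ‖y‖) x = 1 := by
  have hx0 : ‖x‖ ≠ 0 := norm_ne_zero_iff.2 (by rintro rfl; simp at hx)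
  have hlog := ((hasStrictFDerivAt_norm_sq x).hasFDerivAt.log (pow_ne_zero 2 hx0)).const_mul 2⁻¹
  have hfun : (fun y : E => 2⁻¹ * Real.log (‖y‖ ^ 2)) = fun y => Real.log ‖y‖ := by
    ext y
    rw [Real.log_pow]
    push_cast
    ring
  rw [hfun] at hlog
  simp only [logRadialDeriv, hlog.fderiv, smul_apply, innerSL_apply_apply,
    smul_eq_mul, nsmul_eq_mul, real_inner_comm x (∇ f x)]
  rw [real_inner_comm x (∇ f x)] at hx
  field_simp
  norm_num

theorem logRadialDeriv_inner_gradient (hf : ContDiffAt ℝ 2 f x) (v : E) :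
    logRadialDeriv f (fun y => ⟪v, ∇ f y⟫) x = ⟪v, logRadialDeriv f (∇ f) x⟫ := by
  have h := (hasFDerivAt_const v x).inner ℝ (differentiableAt_gradient hf).hasFDerivAt
  simp only [logRadialDeriv]
  rw [h.fderiv, inner_smul_right]
  simp

theorem hasDerivAt_comp_gradientTrajectory {s : ℝ}
    (hγ : HasDerivAt γ (‖∇ f (γ s)‖⁻¹ • ∇ f (γ s)) s) (hpos : ⟪∇ f (γ s), γ s⟫ ≠ 0)
    (hF : DifferentiableAt ℝ F (γ s)) :
    HasDerivAt (fun s => F (γ s)) (logRadialDeriv f F (γ s) * logRadialSpeed f (γ s)) s := by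
  have hγ0 : ‖γ s‖ ≠ 0 := norm_ne_zero_iff.2 (by rintro h; simp [h] at hpos)
  refine (hF.hasFDerivAt.comp_hasDerivAt s hγ).congr_deriv ?_
  simp only [logRadialDeriv, logRadialSpeed, map_smul, smul_eq_mul]
  field_simp

/-- A trajectory of `∇ f / ‖∇ f‖` that goes to infinity, eventually moves away from the origin, and
does not oscillate with respect to the functions in `𝒜`. -/
structure IsNonOscillatingTrajectory (f : E → ℝ) (𝒜 : Subalgebra ℝ (E → ℝ)) (γ : ℝ → E) :
    Prop where
  hasDerivAt : ∀ᶠ s in atTop, HasDerivAt γ (‖∇ f (γ s)‖⁻¹ • ∇ f (γ s)) s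
  tendsto_norm : Tendsto (fun s => ‖γ s‖) atTop atTop
  inner_pos : ∀ᶠ s in atTop, 0 < ⟪∇ f (γ s), γ s⟫
  nonOscillating : ∀ F ∈ 𝒜, ∃ s₀ : ℝ, (∀ s ≥ s₀, F (γ s) = 0) ∨ ∀ s ≥ s₀, F (γ s) ≠ 0

namespace IsNonOscillatingTrajectory

variable (hγ : IsNonOscillatingTrajectory f 𝒜 γ) (h𝒜 : IsDifferentialAlgebra 𝒜)
include hγ

theorem eventually_norm_pos : ∀ᶠ s in atTop, 0 < ‖γ s‖ :=
  hγ.tendsto_norm.eventually_gt_atTop 0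

theorem eventually_gradient_ne_zero : ∀ᶠ s in atTop, ∇ f (γ s) ≠ 0 := by
  filter_upwards [hγ.inner_pos] with s hs h
  simp [h] at hs

theorem eventually_logRadialSpeed_nonneg : ∀ᶠ s in atTop, 0 ≤ logRadialSpeed f (γ s) := by
  filter_upwards [hγ.inner_pos] with s hs
  rw [logRadialSpeed]
  positivity

theorem eventually_hasDerivAt_comp : ∀ᶠ s in atTop, ∀ F : E → ℝ, DifferentiableAt ℝ F (γ s) →
    HasDerivAt (fun s => F (γ s)) (logRadialDeriv f F (γ s) * logRadialSpeed f (γ s)) s := by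
  filter_upwards [hγ.hasDerivAt, hγ.inner_pos] with s hs hpos F hF
    using hasDerivAt_comp_gradientTrajectory hs hpos.ne' hF

theorem eventually_hasDerivAt_log_norm : ∀ᶠ s in atTop,
    HasDerivAt (fun s => Real.log ‖γ s‖) (logRadialSpeed f (γ s)) s := by
  filter_upwards [hγ.eventually_hasDerivAt_comp, hγ.eventually_norm_pos, hγ.inner_pos]
    with s hs hr hpos
  have hdiff : DifferentiableAt ℝ (fun x => Real.log ‖x‖) (γ s) :=
    (differentiableAt_id.norm ℝ (norm_pos_iff.1 hr)).log hr.ne'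
  simpa only [logRadialDeriv_log_norm hpos.ne', one_mul] using hs _ hdiff

include h𝒜

theorem hasEventualSign (hF : F ∈ 𝒜) : HasEventualSign fun s => F (γ s) :=
  hasEventualSign_of_continuousAt
    (hγ.hasDerivAt.mono fun s hs =>
      (h𝒜.differentiable F hF (γ s)).continuousAt.comp hs.continuousAt)
    (hγ.nonOscillating F hF)

/-- Only the square of the denominator `D` has to lie in `𝒜`, which allows for the square root
`‖∇ f‖` of a function in `𝒜`. -/
theorem hasEventualSign_sub_const (hF : F ∈ 𝒜) (hG : G ∈ 𝒜) {w D : ℝ → ℝ}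
    (hD : ∀ᶠ s in atTop, 0 < D s) (hDG : ∀ᶠ s in atTop, D s ^ 2 = G (γ s))
    (hw : ∀ᶠ s in atTop, w s * D s = F (γ s)) (c : ℝ) : HasEventualSign fun s => w s - c := by
  have hsign : HasEventualSign w :=
    ((hγ.hasEventualSign h𝒜 hF).congr (hw.mono fun s hs => hs.symm)).of_mul_pos hD
  have hsq : HasEventualSign fun s => w s ^ 2 - c ^ 2 := by
    have hmem : F ^ 2 - c ^ 2 • G ∈ 𝒜 := sub_mem (pow_mem hF 2) (𝒜.smul_mem hG _)
    refine ((hγ.hasEventualSign h𝒜 hmem).congr ?_).of_mul_pos (hD.mono fun s hs => pow_pos hs 2)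
    filter_upwards [hDG, hw] with s hDG hw
    simp only [Pi.sub_apply, Pi.pow_apply, Pi.smul_apply, smul_eq_mul, ← hDG, ← hw]
    ring
  exact hsign.sub_of_sq_sub_sq (hasEventualSign_const c) hsq

variable [FiniteDimensional ℝ E] (hf : f ∈ 𝒜)
include hf

theorem tendsto_logRadialDeriv_div_self (hF : F ∈ 𝒜) {p L : ℝ} (hL : 0 < L)
    (hlim : Tendsto (fun s => F (γ s) * ‖γ s‖ ^ p) atTop (𝓝 L)) :
    Tendsto (fun s => logRadialDeriv f F (γ s) / F (γ s)) atTop (𝓝 (-p)) := by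
  have hpos : ∀ᶠ s in atTop, 0 < F (γ s) := by
    filter_upwards [hlim.eventually_const_lt hL, hγ.eventually_norm_pos] with s hs hr
      using pos_of_mul_pos_left hs (by positivity)
  refine tendsto_neg_of_hasDerivAt_of_tendsto_mul_exp (φ := fun s => F (γ s)) hL
    (hlim.congr' ?_) ?_ hγ.eventually_hasDerivAt_log_norm hγ.eventually_logRadialSpeed_nonneg
    (Real.tendsto_log_atTop.comp hγ.tendsto_norm) ?_
  · filter_upwards [hγ.eventually_norm_pos] with s hr
    rw [Real.rpow_def_of_pos hr]
  · filter_upwards [hγ.eventually_hasDerivAt_comp, hpos] with s hs hpos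
    rw [div_mul_cancel₀ _ hpos.ne']
    exact hs F (h𝒜.differentiable F hF _)
  · have hden := mul_mem (h𝒜.inner_gradient_self_mem hf) hF
    refine hγ.hasEventualSign_sub_const h𝒜
      (mul_mem h𝒜.norm_sq_mem (h𝒜.fderiv_apply_gradient_mem hF hf)) (pow_mem hden 2)
      (D := fun s => ⟪∇ f (γ s), γ s⟫ * F (γ s)) ?_ (.of_forall fun s => rfl) ?_
    · filter_upwards [hγ.inner_pos, hpos] with s hT hF using mul_pos hT hF
    · filter_upwards [hγ.inner_pos, hpos] with s hT hF
      simp only [logRadialDeriv, smul_eq_mul, Pi.mul_apply]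
      field_simp

theorem tendsto_logRadialDeriv_div_sqrt (hF : F ∈ 𝒜) (hG : G ∈ 𝒜)
    (hpos : ∀ᶠ s in atTop, 0 < G (γ s)) {C : ℝ}
    (hbdd : ∀ᶠ s in atTop, |F (γ s) / √(G (γ s))| ≤ C) :
    Tendsto (fun s => (logRadialDeriv f F (γ s) -
      F (γ s) * (logRadialDeriv f G (γ s) / (2 * G (γ s)))) / √(G (γ s))) atTop (𝓝 0) := by
  refine tendsto_zero_of_bounded_of_hasDerivAt hbdd ?_ hγ.eventually_hasDerivAt_log_norm
    hγ.eventually_logRadialSpeed_nonneg (Real.tendsto_log_atTop.comp hγ.tendsto_norm) ?_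
  · filter_upwards [hγ.eventually_hasDerivAt_comp, hpos] with s hs hpos
    have hsqrt := Real.sqrt_pos.2 hpos
    refine ((hs F (h𝒜.differentiable F hF _)).div
      ((hs G (h𝒜.differentiable G hG _)).sqrt hpos.ne') hsqrt.ne').congr_deriv ?_
    field_simp
    rw [Real.sq_sqrt hpos.le]
    ring
  · have hT := h𝒜.inner_gradient_self_mem hf
    refine hγ.hasEventualSign_sub_const h𝒜
      (mul_mem h𝒜.norm_sq_mem (sub_mem
        (𝒜.smul_mem (mul_mem hG (h𝒜.fderiv_apply_gradient_mem hF hf)) 2)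
        (mul_mem hF (h𝒜.fderiv_apply_gradient_mem hG hf))))
      (𝒜.smul_mem (mul_mem (pow_mem hG 3) (pow_mem hT 2)) 4)
      (D := fun s => 2 * G (γ s) * √(G (γ s)) * ⟪∇ f (γ s), γ s⟫) ?_ ?_ ?_
    · filter_upwards [hγ.inner_pos, hpos] with s hT hG
      positivity
    · filter_upwards [hpos] with s hG
      simp only [Pi.smul_apply, Pi.mul_apply, Pi.pow_apply, smul_eq_mul, mul_pow,
        Real.sq_sqrt hG.le]
      ring
    · filter_upwards [hγ.inner_pos, hpos] with s hT hG
      simp only [logRadialDeriv, smul_eq_mul, Pi.mul_apply, Pi.sub_apply, Pi.smul_apply]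
      field_simp

theorem tendsto_rpow_norm_mul_norm_gradient {m β : ℝ} (hm : 0 < m) (hβ : 0 < β)
    (hfm : Tendsto (fun s => f (γ s) * ‖γ s‖ ^ m) atTop (𝓝 (-β)))
    (hradial : Tendsto (fun s => ⟪∇ f (γ s), γ s⟫ * ‖γ s‖ ^ m) atTop (𝓝 (m * β))) :
    Tendsto (fun s => ‖γ s‖ ^ (m + 1) * ‖∇ f (γ s)‖) atTop (𝓝 (m * β)) := by
  have hneg : Tendsto (fun s => (-f) (γ s) * ‖γ s‖ ^ m) atTop (𝓝 β) := by
    simpa only [Pi.neg_apply, neg_mul, neg_neg] using hfm.neg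
  have hlog := hγ.tendsto_logRadialDeriv_div_self h𝒜 hf (neg_mem hf) hβ hneg
  have hsq : Tendsto (fun s => (‖γ s‖ ^ (m + 1) * ‖∇ f (γ s)‖) ^ 2) atTop (𝓝 ((m * β) ^ 2)) := by
    rw [show (m * β) ^ 2 = -(-m) * β * (m * β) by ring]
    refine ((hlog.neg.mul hneg).mul hradial).congr' ?_
    filter_upwards [hγ.eventually_norm_pos, hγ.inner_pos, hneg.eventually_const_lt hβ]
      with s hr hT hfs
    have hfs' : f (γ s) ≠ 0 := by rintro h; simp [h] at hfs
    rw [Real.rpow_add_one hr.ne', logRadialDeriv, fderiv_neg]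
    simp only [neg_apply, ← inner_gradient_left, real_inner_self_eq_norm_sq,
      Pi.neg_apply, smul_eq_mul]
    field_simp
  simpa only [Real.sqrt_sq (mul_nonneg (Real.rpow_nonneg (norm_nonneg _) _) (norm_nonneg _)),
    Real.sqrt_sq (mul_pos hm hβ).le] using hsq.sqrt

theorem tendsto_logRadialDeriv_norm_gradient_sq_div {p c : ℝ} (hc : 0 < c)
    (hlim : Tendsto (fun s => ‖γ s‖ ^ p * ‖∇ f (γ s)‖) atTop (𝓝 c)) :
    Tendsto (fun s => logRadialDeriv f (fun x => ‖∇ f x‖ ^ 2) (γ s) / (2 * ‖∇ f (γ s)‖ ^ 2)) atTop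
      (𝓝 (-p)) := by
  have h := hγ.tendsto_logRadialDeriv_div_self h𝒜 hf (h𝒜.norm_gradient_sq_mem hf) (p := 2 * p)
    (pow_pos hc 2) ((hlim.pow 2).congr fun s => by
      rw [mul_pow, mul_comm, mul_comm 2 p, Real.rpow_mul (norm_nonneg _), Real.rpow_two])
  have hhalf := h.div_const 2
  rw [neg_div, mul_div_cancel_left₀ p two_ne_zero] at hhalf
  exact hhalf.congr fun s => by rw [div_div, mul_comm 2 (_ ^ 2)]

theorem tendsto_logRadialDeriv_gradient {p c : ℝ} (hc : 0 < c)
    (hlim : Tendsto (fun s => ‖γ s‖ ^ p * ‖∇ f (γ s)‖) atTop (𝓝 c)) :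
    Tendsto (fun s => ‖∇ f (γ s)‖⁻¹ • (logRadialDeriv f (∇ f) (γ s) + p • ∇ f (γ s))) atTop
      (𝓝 0) := by
  refine tendsto_zero_of_forall_inner_tendsto_zero fun v => ?_
  have hnorm := hγ.tendsto_logRadialDeriv_norm_gradient_sq_div h𝒜 hf hc hlim
  have hbdd : ∀ᶠ s in atTop, |⟪v, ∇ f (γ s)⟫ / ‖∇ f (γ s)‖| ≤ ‖v‖ := .of_forall fun s => by
    rw [abs_div, abs_norm]
    exact div_le_of_le_mul₀ (norm_nonneg _) (norm_nonneg _) (abs_real_inner_le_norm _ _)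
  have h := hγ.tendsto_logRadialDeriv_div_sqrt h𝒜 hf (h𝒜.inner_gradient_mem hf v)
    (h𝒜.norm_gradient_sq_mem hf)
    (hγ.eventually_gradient_ne_zero.mono fun s hs => pow_pos (norm_pos_iff.2 hs) 2)
    (C := ‖v‖) (by simpa only [Real.sqrt_sq (norm_nonneg _)] using hbdd)
  simp only [Real.sqrt_sq (norm_nonneg _),
    logRadialDeriv_inner_gradient (h𝒜.contDiff hf 2).contDiffAt] at h
  have hzero : Tendsto (fun s => ⟪v, ∇ f (γ s)⟫ / ‖∇ f (γ s)‖ *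
      (logRadialDeriv f (fun x => ‖∇ f x‖ ^ 2) (γ s) / (2 * ‖∇ f (γ s)‖ ^ 2) + p)) atTop (𝓝 0) :=
    bdd_le_mul_tendsto_zero' ‖v‖ hbdd (by simpa using hnorm.add_const p)
  simpa using (h.add hzero).congr fun s => by
    simp only [inner_smul_right, inner_add_right]
    ring

theorem tendsto_norm_mul_norm_gradient_rpow_norm_mul_norm_gradient {p c : ℝ} (hp : 1 < p)
    (hc : 0 < c)
    (hlim : Tendsto (fun s => ‖γ s‖ ^ p * ‖∇ f (γ s)‖) atTop (𝓝 c))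
    (hcos : Tendsto (fun s => ⟪‖γ s‖⁻¹ • γ s, ‖∇ f (γ s)‖⁻¹ • ∇ f (γ s)⟫) atTop (𝓝 1)) :
    Tendsto (fun s => ‖γ s‖ * ‖∇ (fun x => ‖x‖ ^ p * ‖∇ f x‖) (γ s)‖) atTop (𝓝 0) := by
  have hradial := tendsto_sub_inner_smul_zero (a := fun s => ‖γ s‖⁻¹ • γ s)
    (b := fun s => ‖∇ f (γ s)‖⁻¹ • ∇ f (γ s))
    (hγ.eventually_norm_pos.mono fun s hs => norm_smul_inv_norm (norm_pos_iff.1 hs))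
    (hγ.eventually_gradient_ne_zero.mono fun s hs => norm_smul_inv_norm hs) hcos
  have hhessian := hcos.smul (hγ.tendsto_logRadialDeriv_gradient h𝒜 hf hc hlim)
  have hsum := hlim.smul ((hradial.const_smul p).add hhessian)
  rw [smul_zero, smul_zero, add_zero, smul_zero, tendsto_zero_iff_norm_tendsto_zero] at hsum
  refine hsum.congr' ?_
  filter_upwards [hγ.eventually_norm_pos, hγ.eventually_gradient_ne_zero, hγ.inner_pos]
    with s hr hN hT
  have hN' : ‖∇ f (γ s)‖ ≠ 0 := norm_ne_zero_iff.2 hN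
  rw [← norm_norm (γ s), ← norm_smul, norm_norm, norm_smul_gradient_rpow_norm_mul_norm_gradient hp
    (h𝒜.contDiff hf 2).contDiffAt (norm_pos_iff.1 hr) hN]
  congr 2
  have hT' := hT.ne'
  simp only [logRadialDeriv, real_inner_smul_left, real_inner_smul_right,
    real_inner_comm (∇ f (γ s)) (γ s)]
  match_scalars <;> field_simp
  ring

end IsNonOscillatingTrajectory

theorem m_beta_asymptotic_critical_value_at_infinity_general [FiniteDimensional ℝ E]
    (h𝒜 : IsDifferentialAlgebra 𝒜) (hf : f ∈ 𝒜)
    (hode : ∀ᶠ s in atTop, HasDerivAt γ (‖∇ f (γ s)‖⁻¹ • ∇ f (γ s)) s)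
    (hunbounded : Tendsto (fun s => ‖γ s‖) atTop atTop)
    (hosc : ∀ F ∈ 𝒜, ∃ s₀ : ℝ, (∀ s ≥ s₀, F (γ s) = 0) ∨ ∀ s ≥ s₀, F (γ s) ≠ 0)
    {m β : ℝ} (hm : 0 < m) (hβ : 0 < β)
    (hexp1 : (fun s => f (γ s) + β * ‖γ s‖ ^ (-m)) =o[atTop] fun s => ‖γ s‖ ^ (-m))
    (hexp2 : (fun s => ⟪∇ f (γ s), ‖γ s‖⁻¹ • γ s⟫ - m * β * ‖γ s‖ ^ (-1 - m))
      =o[atTop] fun s => ‖γ s‖ ^ (-1 - m)) :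
    Tendsto (fun s => ‖γ s‖ ^ (m + 1) * ‖∇ f (γ s)‖) atTop (𝓝 (m * β)) ∧
    Tendsto (fun s => ‖γ s‖ * ‖∇ (fun x => ‖x‖ ^ (m + 1) * ‖∇ f x‖) (γ s)‖) atTop (𝓝 0) := by
  have hc : 0 < m * β := mul_pos hm hβ
  have hnorm : ∀ᶠ s in atTop, 0 < ‖γ s‖ := hunbounded.eventually_gt_atTop 0
  have hfm : Tendsto (fun s => f (γ s) * ‖γ s‖ ^ m) atTop (𝓝 (-β)) :=
    tendsto_mul_rpow_of_isLittleO hnorm (by simpa only [neg_mul, sub_neg_eq_add] using hexp1)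
  have hradial : Tendsto (fun s => ⟪∇ f (γ s), γ s⟫ * ‖γ s‖ ^ m) atTop (𝓝 (m * β)) := by
    rw [show -1 - m = -(m + 1) by ring] at hexp2
    refine (tendsto_mul_rpow_of_isLittleO hnorm hexp2).congr' ?_
    filter_upwards [hnorm] with s hr
    rw [Real.rpow_add_one hr.ne', real_inner_smul_right]
    field_simp
  have hγ : IsNonOscillatingTrajectory f 𝒜 γ :=
    ⟨hode, hunbounded, by
      filter_upwards [hradial.eventually_const_lt hc, hnorm] with s hs hr
        using pos_of_mul_pos_left hs (by positivity), hosc⟩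
  have hlim := hγ.tendsto_rpow_norm_mul_norm_gradient h𝒜 hf hm hβ hfm hradial
  exact ⟨hlim, hγ.tendsto_norm_mul_norm_gradient_rpow_norm_mul_norm_gradient h𝒜 hf (by linarith) hc
    hlim (tendsto_inner_unit_vectors_one hc hnorm hradial hlim)⟩

end GradientTrajectory

/-- `m·β` is an asymptotic critical value at infinity of
`g(x) = |x|^{m+1}|∇f(x)|`, witnessed along the trajectory. -/
theorem m_beta_asymptotic_critical_value_at_infinity
    {n : ℕ} (hn : 2 ≤ n)
    (f : EuclideanSpace ℝ (Fin n) → ℝ)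
    (hfpoly : ∃ P : MvPolynomial (Fin n) ℝ, ∀ x : EuclideanSpace ℝ (Fin n),
      f x = MvPolynomial.eval (fun i => x i) P)
    (γ : ℝ → EuclideanSpace ℝ (Fin n))
    (hγreg : ∀ s ∈ Set.Ici (0 : ℝ), gradient f (γ s) ≠ 0)
    (hγode : ∀ s ∈ Set.Ici (0 : ℝ),
      HasDerivAt γ (‖gradient f (γ s)‖⁻¹ • gradient f (γ s)) s)
    (hunbounded : Tendsto (fun s => ‖γ s‖) atTop atTop)
    (hfneg : ∀ s ∈ Set.Ici (0 : ℝ), f (γ s) < 0)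
    (hfmono : StrictMonoOn (fun s => f (γ s)) (Set.Ici (0 : ℝ)))
    (hflim : Tendsto (fun s => f (γ s)) atTop (𝓝 0))
    (hosc : ∀ g : EuclideanSpace ℝ (Fin n) → ℝ,
      (∃ Q : MvPolynomial (Fin n) ℝ, ∀ x : EuclideanSpace ℝ (Fin n),
        g x = MvPolynomial.eval (fun i => x i) Q) →
      ∃ s₀ : ℝ, (∀ s ≥ s₀, g (γ s) = 0) ∨ (∀ s ≥ s₀, g (γ s) ≠ 0))
    (m : ℝ) (hm : 0 < m) (hmQ : ∃ q : ℚ, m = (q : ℝ)) (β : ℝ) (hβ : 0 < β)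
    (hexp1 : (fun s => f (γ s) + β * ‖γ s‖ ^ (-m)) =o[atTop] fun s => ‖γ s‖ ^ (-m))
    (hexp2 : (fun s => ⟪gradient f (γ s), ‖γ s‖⁻¹ • γ s⟫ - m * β * ‖γ s‖ ^ (-1 - m))
      =o[atTop] fun s => ‖γ s‖ ^ (-1 - m)) :
    Tendsto (fun s => ‖γ s‖ ^ (m + 1) * ‖gradient f (γ s)‖) atTop (𝓝 (m * β)) ∧
    Tendsto (fun s =>
        ‖γ s‖ * ‖gradient (fun x => ‖x‖ ^ (m + 1) * ‖gradient f x‖) (γ s)‖)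
      atTop (𝓝 0) := by
  exact m_beta_asymptotic_critical_value_at_infinity_general
    (isDifferentialAlgebra_euclideanPolynomialFunctions (Fin n))
    (mem_euclideanPolynomialFunctions_iff.2 hfpoly)
    ((eventually_ge_atTop 0).mono hγode) hunbounded
    (fun F hF => hosc F (mem_euclideanPolynomialFunctions_iff.1 hF)) hm hβ hexp1 hexp2
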